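/- arXiv:2004.05035 — 2 statements merged into one kernel-verified Lean document; each statement's English description precedes it below -/
import Mathlib

section
/- With the notation a_p^{(k,ℓ)}(u) = (-q)^{k-p}·((q^{-2};q^{-2})_{k-p}/(u q^{-2p};q^{-2})_{k-p})·[k choose p]_q·[ℓ choose k-p]_q and a₀^{(1,ℓ)}(u) = -q(1 - q^{-2})/(1 - u), the following recursion holds for 1 ≤ p ≤ k-1 and 1 < k ≤ ℓ: a_{p-1}^{(k-1,ℓ)}(u q^{-2})·(q^{k-p} + ([k-p]_q/[ℓ]_q)·a₀^{(1,ℓ)}(u)) + a_p^{(k-1,ℓ)}(u q^{-2})·q^{2p-k+1}·([ℓ+p-k+1]_q/[ℓ]_q)·a₀^{(1,ℓ)}(u) = a_p^{(k,ℓ)}(u). -/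
/-!
All three coefficients with upper index `k` or `k - 1` are proportional: absorption for the
q-binomial compares `a_p^{(k,ℓ)}(u)` with `a_{p-1}^{(k-1,ℓ)}(uq⁻²)`, and raising `p - 1` to `p`
compares the latter with `a_p^{(k-1,ℓ)}(uq⁻²)`. Dividing out the common factor, the recursion
becomes an identity that is linear in `u`. With `m = k - p`, its constant term is the addition
formula `[p+m]_q = q^{-m} [p]_q + q^p [m]_q`, and its coefficient of `u` is the mirror formula
`[p+m]_q = q^m [p]_q + q^{-p} [m]_q`.
-/

noncomputable section

/-- The q-integer `[L]_q = (q^L - q^{-L})/(q - q⁻¹)`. -/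
def qInt {K : Type*} [Field K] (q : K) (L : ℕ) : K :=
  (q ^ L - q⁻¹ ^ L) / (q - q⁻¹)

/-- The q-factorial `[L]_q! = [1]_q [2]_q ⋯ [L]_q`. -/
def qFact {K : Type*} [Field K] (q : K) (L : ℕ) : K :=
  ∏ m ∈ Finset.range L, qInt q (m + 1)

/-- The q-binomial `[L choose p]_q = [L]_q!/([L-p]_q! [p]_q!)`. -/
def qBinom {K : Type*} [Field K] (q : K) (L p : ℕ) : K :=
  qFact q L / (qFact q (L - p) * qFact q p)

/-- The q-Pochhammer symbol `(a ; q)_p = ∏_{r=0}^{p-1} (1 - a q^r)`. -/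
def qPoch {K : Type*} [Field K] (a q : K) (p : ℕ) : K :=
  ∏ r ∈ Finset.range p, (1 - a * q ^ r)

/-- The Baxterisation coefficient
`a_p^{(k,ℓ)}(u) = (-q)^{k-p} ((q⁻²;q⁻²)_{k-p}/(u q^{-2p};q⁻²)_{k-p}) [k choose p]_q [ℓ choose k-p]_q`. -/
def aCoef {K : Type*} [Field K] (q u : K) (k ℓ p : ℕ) : K :=
  (-q) ^ (k - p) *
    (qPoch (q⁻¹ ^ 2) (q⁻¹ ^ 2) (k - p) / qPoch (u * q⁻¹ ^ (2 * p)) (q⁻¹ ^ 2) (k - p)) *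
    qBinom q k p * qBinom q ℓ (k - p)

section QIntegers

variable {K : Type*} [Field K] {q : K}

theorem qInt_mul_sub_inv (q : K) (n : ℕ) : qInt q n * (q - q⁻¹) = q ^ n - q⁻¹ ^ n :=
  div_mul_cancel_of_imp fun h => by rw [← sub_eq_zero.mp h, sub_self]

theorem pow_mul_one_sub_inv_sq_pow (hq : q ≠ 0) (n : ℕ) :
    q ^ n * (1 - (q⁻¹ ^ 2) ^ n) = qInt q n * (q - q⁻¹) := by
  rw [qInt_mul_sub_inv, mul_sub, mul_one, ← pow_mul, mul_comm 2, pow_mul, sq, ← mul_assoc,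
    ← mul_pow, mul_inv_cancel₀ hq, one_pow, one_mul]

theorem qInt_add (q : K) (m n : ℕ) :
    qInt q (m + n) = q ^ m * qInt q n + q⁻¹ ^ n * qInt q m := by
  simp only [qInt]
  ring

theorem qInt_add_mul_one_sub (hq : q ≠ 0) (u : K) (p m : ℕ) :
    qInt q (p + m) * (1 - u) =
      qInt q p * (q ^ m * (1 - u) - (q - q⁻¹) * qInt q m) +
        q ^ p * qInt q m * (1 - u * q⁻¹ ^ (2 * p)) := by
  have hp : q ^ p * q⁻¹ ^ (2 * p) = q⁻¹ ^ p := by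
    rw [two_mul, pow_add, ← mul_assoc, ← mul_pow, mul_inv_cancel₀ hq, one_pow, one_mul]
  have mirror : qInt q (p + m) = q ^ m * qInt q p + q⁻¹ ^ p * qInt q m :=
    add_comm m p ▸ qInt_add q m p
  linear_combination qInt_add q p m - u * mirror + qInt q p * qInt_mul_sub_inv q m +
    u * qInt q m * hp

theorem qInt_one (hq : q ≠ q⁻¹) : qInt q 1 = 1 := by
  simp [qInt, sub_ne_zero.mpr hq]

theorem ne_inv_of_qInt_ne_zero {n : ℕ} (h : qInt q n ≠ 0) : q ≠ q⁻¹ := by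
  rintro hq
  exact h (by simp [qInt, ← hq])

theorem qInt_ne_zero (hq₀ : q ≠ 0) (hq : ¬IsOfFinOrder q) {n : ℕ} (hn : n ≠ 0) :
    qInt q n ≠ 0 := by
  have pow_ne_inv_pow {m : ℕ} (hm : m ≠ 0) : q ^ m ≠ q⁻¹ ^ m := by
    intro h
    refine hq (isOfFinOrder_iff_pow_eq_one.mpr ⟨m + m, by lia, ?_⟩)
    rw [pow_add]
    nth_rw 2 [h]
    rw [← mul_pow, mul_inv_cancel₀ hq₀, one_pow]
  have hq₁ : q ≠ q⁻¹ := by simpa using pow_ne_inv_pow one_ne_zero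
  exact div_ne_zero (sub_ne_zero.mpr (pow_ne_inv_pow hn)) (sub_ne_zero.mpr hq₁)

theorem qFact_succ (q : K) (n : ℕ) : qFact q (n + 1) = qFact q n * qInt q (n + 1) :=
  Finset.prod_range_succ _ n

theorem qFact_ne_zero (hq₀ : q ≠ 0) (hq : ¬IsOfFinOrder q) (n : ℕ) : qFact q n ≠ 0 :=
  Finset.prod_ne_zero_iff.mpr fun m _ => qInt_ne_zero hq₀ hq m.succ_ne_zero

theorem qInt_ne_zero_of_qFact_ne_zero {n m : ℕ} (h : qFact q n ≠ 0) (hm : m < n) :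
    qInt q (m + 1) ≠ 0 :=
  Finset.prod_ne_zero_iff.mp h m (Finset.mem_range.mpr hm)

theorem qBinom_zero_right {n : ℕ} (h : qFact q n ≠ 0) : qBinom q n 0 = 1 := by
  simpa [qBinom, qFact] using div_self h

theorem qBinom_succ_succ_mul_qInt (n p : ℕ) (hp : qInt q (p + 1) ≠ 0) :
    qBinom q (n + 1) (p + 1) * qInt q (p + 1) = qBinom q n p * qInt q (n + 1) := by
  simp only [qBinom, qFact_succ, Nat.add_sub_add_right]
  field_simp

theorem qBinom_succ_right_mul_qInt {p m : ℕ} (hp : qInt q (p + 1) ≠ 0)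
    (hm : qInt q (m + 1) ≠ 0) :
    qBinom q (p + m + 1) (p + 1) * qInt q (p + 1) =
      qBinom q (p + m + 1) p * qInt q (m + 1) := by
  simp only [qBinom, show p + m + 1 - (p + 1) = m by lia, show p + m + 1 - p = m + 1 by lia,
    qFact_succ q p, qFact_succ q m]
  field_simp

theorem qBinom_one_right {n : ℕ} (h : qFact q (n + 1) ≠ 0) :
    qBinom q (n + 1) 1 = qInt q (n + 1) := by
  have h₁ : qInt q 1 = 1 :=
    qInt_one (ne_inv_of_qInt_ne_zero (qInt_ne_zero_of_qFact_ne_zero h n.succ_pos))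
  have absorption := qBinom_succ_succ_mul_qInt n 0 (q := q) (by simp [h₁])
  rw [qFact_succ] at h
  simpa [h₁, qBinom_zero_right (left_ne_zero_of_mul h)] using absorption

end QIntegers

section QPochhammer

variable {K : Type*} [Field K]

theorem qPoch_succ (a q : K) (n : ℕ) : qPoch a q (n + 1) = qPoch a q n * (1 - a * q ^ n) :=
  Finset.prod_range_succ _ n

theorem qPoch_succ' (a q : K) (n : ℕ) :
    qPoch a q (n + 1) = (1 - a) * qPoch (a * q) q n := by
  simp only [qPoch, Finset.prod_range_succ', pow_zero, mul_one, pow_succ', mul_assoc]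
  exact mul_comm _ _

theorem qPoch_ne_zero {F : Type*} [Field F] [Algebra F K] {u : K} (hu : Transcendental F u)
    (a b : F) (n : ℕ) : qPoch (u * algebraMap F K a) (algebraMap F K b) n ≠ 0 := by
  refine Finset.prod_ne_zero_iff.mpr fun r _ h => hu ?_
  have hr : u * algebraMap F K (a * b ^ r) = 1 := by
    rw [map_mul, map_pow, ← mul_assoc]
    exact (sub_eq_zero.mp h).symm
  rw [eq_inv_of_mul_eq_one_left hr, ← map_inv₀]
  exact isAlgebraic_algebraMap _

end QPochhammer

section Coefficients

variable {K : Type*} [Field K] {q : K}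

theorem aCoef_one_zero {u : K} {n : ℕ} (h : qFact q (n + 1) ≠ 0) :
    aCoef q u 1 (n + 1) 0 = -(q - q⁻¹) / (1 - u) * qInt q (n + 1) := by
  have hq : q ≠ q⁻¹ := ne_inv_of_qInt_ne_zero (qInt_ne_zero_of_qFact_ne_zero h n.succ_pos)
  have hq₀ : q ≠ 0 := by
    rintro rfl
    simp at hq
  have h₁ : qBinom q 1 0 = 1 := qBinom_zero_right (by simp [qFact, qInt_one hq])
  simp only [aCoef, Nat.sub_zero, h₁, qBinom_one_right h, qPoch, Finset.prod_range_one,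
    pow_zero, pow_one, mul_zero, mul_one]
  field_simp

theorem aCoef_succ_succ_mul_qInt (u : K) (k ℓ p : ℕ) (hp : qInt q (p + 1) ≠ 0) :
    aCoef q u (k + 1) ℓ (p + 1) * qInt q (p + 1) =
      aCoef q (u * q⁻¹ ^ 2) k ℓ p * qInt q (k + 1) := by
  have hu : u * q⁻¹ ^ (2 * (p + 1)) = u * q⁻¹ ^ 2 * q⁻¹ ^ (2 * p) := by ring
  simp only [aCoef, Nat.add_sub_add_right, hu]
  linear_combination (-q) ^ (k - p) *
    (qPoch (q⁻¹ ^ 2) (q⁻¹ ^ 2) (k - p) / qPoch (u * q⁻¹ ^ 2 * q⁻¹ ^ (2 * p)) (q⁻¹ ^ 2) (k - p)) *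
    qBinom q ℓ (k - p) * qBinom_succ_succ_mul_qInt k p hp

theorem aCoef_succ_right_mul_qInt {u : K} {p m n : ℕ} (hq : q ≠ 0)
    (hu : 1 - u * q⁻¹ ^ (2 * p) ≠ 0) (hp : qInt q (p + 1) ≠ 0) (hm : qInt q (m + 1) ≠ 0)
    (hn : qInt q (n + 1) ≠ 0) :
    -(q - q⁻¹) * aCoef q u (p + m + 1) (m + n + 1) (p + 1) * qInt q (p + 1) * qInt q (n + 1) =
      aCoef q u (p + m + 1) (m + n + 1) p * (1 - u * q⁻¹ ^ (2 * p)) * qInt q (m + 1) * q ^ m := by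
  have hbase : u * q⁻¹ ^ (2 * (p + 1)) = u * q⁻¹ ^ (2 * p) * q⁻¹ ^ 2 := by ring
  simp only [aCoef, show p + m + 1 - p = m + 1 by lia, show p + m + 1 - (p + 1) = m by lia,
    hbase, qPoch_succ' (u * q⁻¹ ^ (2 * p)), qPoch_succ (q⁻¹ ^ 2), ← pow_succ' (q⁻¹ ^ 2)]
  set N := qPoch (q⁻¹ ^ 2) (q⁻¹ ^ 2) m
  set D := qPoch (u * q⁻¹ ^ (2 * p) * q⁻¹ ^ 2) (q⁻¹ ^ 2) m
  have qPoch_ratio : N * (1 - (q⁻¹ ^ 2) ^ (m + 1)) / ((1 - u * q⁻¹ ^ (2 * p)) * D) *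
      (1 - u * q⁻¹ ^ (2 * p)) * q ^ (m + 1) = N / D * (qInt q (m + 1) * (q - q⁻¹)) := by
    rw [mul_comm _ D, ← div_div, div_mul_cancel₀ _ hu, mul_div_right_comm, mul_assoc,
      mul_comm _ (q ^ (m + 1)), pow_mul_one_sub_inv_sq_pow hq]
  have qBinom_ratio : qBinom q (p + m + 1) (p + 1) * qInt q (p + 1) *
      (qBinom q (m + n + 1) m * qInt q (n + 1)) =
      qBinom q (p + m + 1) p * qInt q (m + 1) *
        (qBinom q (m + n + 1) (m + 1) * qInt q (m + 1)) := by
    rw [qBinom_succ_right_mul_qInt hp hm, qBinom_succ_right_mul_qInt hm hn]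
  linear_combination
    (-q) ^ m * qBinom q (p + m + 1) p * qBinom q (m + n + 1) (m + 1) * qInt q (m + 1) *
      qPoch_ratio - (-q) ^ m * (q - q⁻¹) * (N / D) * qBinom_ratio

theorem aCoef_succ_succ_mul_one_sub {u : K} {p m n : ℕ} (hq : q ≠ 0)
    (hu : 1 - u * q⁻¹ ^ (2 * (p + 1)) ≠ 0) (hp : qInt q (p + 1) ≠ 0)
    (hm : qInt q (m + 1) ≠ 0) (hn : qInt q (n + 1) ≠ 0) :
    aCoef q u (p + m + 1 + 1) (m + n + 1) (p + 1) * (1 - u) =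
      aCoef q (u * q⁻¹ ^ 2) (p + m + 1) (m + n + 1) p *
          (q ^ (m + 1) * (1 - u) - (q - q⁻¹) * qInt q (m + 1)) -
        aCoef q (u * q⁻¹ ^ 2) (p + m + 1) (m + n + 1) (p + 1) * q ^ ((p : ℤ) + 1 - m) *
          qInt q (n + 1) * (q - q⁻¹) := by
  have hbase : u * q⁻¹ ^ (2 * (p + 1)) = u * q⁻¹ ^ 2 * q⁻¹ ^ (2 * p) := by ring
  have absorption := aCoef_succ_succ_mul_qInt u (p + m + 1) (m + n + 1) p hp
  have raise_p := aCoef_succ_right_mul_qInt hq (hbase ▸ hu) hp hm hn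
  have hzpow : q ^ ((p : ℤ) + 1 - m) * q ^ m = q ^ (p + 1) := by
    rw [← zpow_natCast q m, ← zpow_add₀ hq, sub_add_cancel]
    exact_mod_cast zpow_natCast q (p + 1)
  have qInt_identity := qInt_add_mul_one_sub hq u (p + 1) (m + 1)
  rw [show p + 1 + (m + 1) = p + m + 1 + 1 by lia, hbase] at qInt_identity
  refine mul_right_cancel₀ hp ?_
  set A := aCoef q (u * q⁻¹ ^ 2) (p + m + 1) (m + n + 1) p
  linear_combination (1 - u) * absorption + A * qInt_identity -
    q ^ ((p : ℤ) + 1 - m) * raise_p -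
    A * (1 - u * q⁻¹ ^ 2 * q⁻¹ ^ (2 * p)) * qInt q (m + 1) * hzpow

theorem aCoef_middle_recursion_general {u : K} {k ℓ p : ℕ} (hp : 1 ≤ p) (hpk : p < k)
    (hkℓ : k ≤ ℓ + p) (hFp : qFact q p ≠ 0) (hFℓ : qFact q ℓ ≠ 0) (hu : u ≠ 1)
    (hpoch : qPoch (u * q⁻¹ ^ (2 * p)) (q⁻¹ ^ 2) (k - p) ≠ 0) :
    aCoef q (u * q⁻¹ ^ 2) (k - 1) ℓ (p - 1) *
        (q ^ (k - p) + (qInt q (k - p) / qInt q ℓ) * aCoef q u 1 ℓ 0) +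
      aCoef q (u * q⁻¹ ^ 2) (k - 1) ℓ p * q ^ (2 * (p : ℤ) - k + 1) *
        (qInt q (ℓ + p + 1 - k) / qInt q ℓ) * aCoef q u 1 ℓ 0 =
      aCoef q u k ℓ p := by
  obtain ⟨p, rfl⟩ := Nat.exists_eq_add_of_le' hp
  obtain ⟨m, rfl⟩ := Nat.exists_eq_add_of_lt hpk
  obtain ⟨n, rfl⟩ : ∃ n, ℓ = m + n + 1 := ⟨ℓ - m - 1, by lia⟩
  have hIp := qInt_ne_zero_of_qFact_ne_zero hFp p.lt_succ_self
  have hIℓ : ∀ i < m + n + 1, qInt q (i + 1) ≠ 0 := fun i => qInt_ne_zero_of_qFact_ne_zero hFℓ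
  have hq : q ≠ 0 := by
    rintro rfl
    simpa using ne_inv_of_qInt_ne_zero hIp
  have hu₁ : 1 - u ≠ 0 := sub_ne_zero.mpr hu.symm
  rw [show p + 1 + m + 1 - (p + 1) = m + 1 by lia, qPoch_succ'] at hpoch
  have cleared := aCoef_succ_succ_mul_one_sub hq (left_ne_zero_of_mul hpoch) hIp
    (hIℓ m (by lia)) (hIℓ n (by lia))
  have hIℓ_last : qInt q (m + n + 1) ≠ 0 := hIℓ (m + n) (by lia)
  have a₀_ratio (x : K) : x / qInt q (m + n + 1) * aCoef q u 1 (m + n + 1) 0 =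
      -(x * (q - q⁻¹)) / (1 - u) := by
    rw [aCoef_one_zero hFℓ, mul_comm (_ / _) (qInt _ _), ← mul_assoc, div_mul_cancel₀ _ hIℓ_last]
    ring
  rw [show p + 1 + m + 1 - (p + 1) = m + 1 by lia,
    show p + 1 + m + 1 - 1 = p + m + 1 by lia, Nat.add_sub_cancel,
    show m + n + 1 + (p + 1) + 1 - (p + 1 + m + 1) = n + 1 by lia,
    show 2 * ((p + 1 : ℕ) : ℤ) - (p + 1 + m + 1 : ℕ) + 1 = p + 1 - m by push_cast; ring,
    show p + 1 + m + 1 = p + m + 1 + 1 by lia, a₀_ratio, mul_assoc _ (_ / _), a₀_ratio,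
    eq_div_of_mul_eq hu₁ cleared]
  have hcancel : q ^ (m + 1) * (1 - u) / (1 - u) = q ^ (m + 1) := mul_div_cancel_right₀ _ hu₁
  linear_combination -aCoef q (u * q⁻¹ ^ 2) (p + m + 1) (m + n + 1) p * hcancel

end Coefficients

theorem not_isOfFinOrder_of_transcendental {R A : Type*} [CommRing R] [Nontrivial R] [Ring A]
    [Algebra R A] {x : A} (hx : Transcendental R x) : ¬IsOfFinOrder x := by
  intro h
  obtain ⟨n, hn, hxn⟩ := isOfFinOrder_iff_pow_eq_one.mp h
  exact hx (IsAlgebraic.of_pow hn (hxn ▸ isAlgebraic_one))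

theorem not_isOfFinOrder_ratFunc_C_X {F : Type*} [Field F] :
    ¬IsOfFinOrder (RatFunc.C RatFunc.X : RatFunc (RatFunc F)) := by
  have C_iff := Function.Injective.isOfFinOrder_iff (x := (RatFunc.X : RatFunc F))
    (f := (RatFunc.C : RatFunc F →+* RatFunc (RatFunc F)).toMonoidHom) RatFunc.C_injective
  exact C_iff.not.mpr (not_isOfFinOrder_of_transcendental RatFunc.transcendental_X)

/-- Middle coefficient recursion in the proof of the generalized Baxterisation lemma:
for `1 ≤ p ≤ k-1` and `1 < k ≤ ℓ`,
`a_{p-1}^{(k-1,ℓ)}(uq⁻²)(q^{k-p} + ([k-p]_q/[ℓ]_q) a₀^{(1,ℓ)}(u))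
  + a_p^{(k-1,ℓ)}(uq⁻²) q^{2p-k+1} ([ℓ+p-k+1]_q/[ℓ]_q) a₀^{(1,ℓ)}(u) = a_p^{(k,ℓ)}(u)`,
as an identity of rational functions in `u` over `ℚ(q)`. -/
theorem aCoef_middle_recursion (k ℓ p : ℕ) (hp : 1 ≤ p) (hpk : p ≤ k - 1)
    (hk : 1 < k) (hkℓ : k ≤ ℓ) :
    let q : RatFunc (RatFunc ℚ) := RatFunc.C RatFunc.X
    let u : RatFunc (RatFunc ℚ) := RatFunc.X
    aCoef q (u * q⁻¹ ^ 2) (k - 1) ℓ (p - 1) *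
        (q ^ (k - p) + (qInt q (k - p) / qInt q ℓ) * aCoef q u 1 ℓ 0) +
      aCoef q (u * q⁻¹ ^ 2) (k - 1) ℓ p * q ^ (2 * (p : ℤ) - k + 1) *
        (qInt q (ℓ + p + 1 - k) / qInt q ℓ) * aCoef q u 1 ℓ 0 =
      aCoef q u k ℓ p := by
  intro q u
  have hq₀ : q ≠ 0 := (map_ne_zero _).mpr RatFunc.X_ne_zero
  have hF : ∀ n, qFact q n ≠ 0 := qFact_ne_zero hq₀ not_isOfFinOrder_ratFunc_C_X
  have hu : Transcendental (RatFunc ℚ) u := RatFunc.transcendental_X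
  have hu₁ : u ≠ 1 := fun h => hu (h ▸ isAlgebraic_one)
  have hpoch : qPoch (u * q⁻¹ ^ (2 * p)) (q⁻¹ ^ 2) (k - p) ≠ 0 := by
    have h := qPoch_ne_zero hu (RatFunc.X⁻¹ ^ (2 * p)) (RatFunc.X⁻¹ ^ 2) (k - p)
    rwa [map_pow, map_pow, map_inv₀, RatFunc.algebraMap_eq_C] at h
  exact aCoef_middle_recursion_general hp (by lia) (by lia) (hF p) (hF ℓ) hu₁ hpoch
end
end

section
/- Let V = ℂ^N with the standard Hecke R-matrix Ř as above, and define Ř(u) := Ř - ((q-q⁻¹)/(1-u))·Id ∈ End(V⊗V). Then the braided Yang–Baxter equation with multiplicative spectral parameters holds in End(V⊗V⊗V): (Ř(u)⊗Id)(Id⊗Ř(uv))(Ř(v)⊗Id) = (Id⊗Ř(v))(Ř(uv)⊗Id)(Id⊗Ř(u)) for all u, v ∈ ℂ with u, v, uv ≠ 1. -/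
open TensorProduct

/-!
An element `g` of an algebra with `g² = l g + m` can be shifted by scalars: if `g`, `h` both satisfy
this relation and `g h g = h g h`, then `(g - a)(h - c)(g - b) - (h - b)(g - c)(h - a)` is the
multiple `c (a + b - l) - a b` of `g - h`. The values `a = l / (1 - u)`, `b = l / (1 - v)`,
`c = l / (1 - u v)` make this coefficient vanish.

The braid relation for `Ř` need not be tested on all words `eᵢ ⊗ eⱼ ⊗ eₖ`. By the quadratic relation
the kernel of `Ř₁₂ Ř₂₃ Ř₁₂ - Ř₂₃ Ř₁₂ Ř₂₃` is stable under `Ř₁₂` and `Ř₂₃`, and every word is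
obtained from a weakly increasing one by these two operators and linear combinations, so the words
with `i ≤ j ≤ k` suffice.
-/

theorem forall_triple_of_sorted {ι : Type*} [LinearOrder ι] {P : ι → ι → ι → Prop}
    (sorted : ∀ i j k, i ≤ j → j ≤ k → P i j k)
    (swap₁₂ : ∀ i j k, P i j k → P j i k) (swap₂₃ : ∀ i j k, P i j k → P i k j)
    (i j k : ι) : P i j k := by
  rcases le_total i j with hij | hij <;> rcases le_total j k with hjk | hjk <;>
    rcases le_total i k with hik | hik <;> grind

theorem apply_mem_ker_of_mul_eq_mul {K M : Type*} [Semiring K] [AddCommMonoid M] [Module K M]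
    {D S T : Module.End K M} (h : D * T = S * D) {y : M} (hy : y ∈ D.ker) : T y ∈ D.ker := by
  rw [LinearMap.mem_ker] at hy ⊢
  rw [← Module.End.mul_apply, h, Module.End.mul_apply, hy, map_zero]

theorem map_quadratic_relation {K A B : Type*} [CommSemiring K] [Semiring A] [Semiring B]
    [Algebra K A] [Algebra K B] (f : A →ₐ[K] B) {g : A} {l m : K}
    (hg : g * g = l • g + m • 1) : f g * f g = l • f g + m • 1 := by
  rw [← map_mul, hg, map_add, map_smul, map_smul, map_one]

section Baxterisation

variable {K A : Type*} [CommRing K] [Ring A] [Algebra K A] {g h : A} {l m : K}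

theorem braid_defect_mul_fst (hg : g * g = l • g + m • 1) (hh : h * h = l • h + m • 1) :
    (g * h * g - h * g * h) * g = (l • 1 - h) * (g * h * g - h * g * h) := by
  calc (g * h * g - h * g * h) * g = g * h * (g * g) - h * g * h * g := by noncomm_ring
    _ = l • (g * h * g) - l • (h * g * h) - h * g * h * g + (l • h + m • 1) * (g * h) := by
      simp only [hg, mul_add, add_mul, mul_smul_comm, smul_mul_assoc, mul_one, one_mul, mul_assoc]
      abel
    _ = (l • 1 - h) * (g * h * g - h * g * h) := by
      simp only [← hh, sub_mul, mul_sub, smul_mul_assoc, one_mul, mul_assoc]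
      abel

theorem braid_defect_mul_snd (hg : g * g = l • g + m • 1) (hh : h * h = l • h + m • 1) :
    (g * h * g - h * g * h) * h = (l • 1 - g) * (g * h * g - h * g * h) := by
  rw [← neg_sub (h * g * h), neg_mul, braid_defect_mul_fst hh hg, mul_neg]

theorem braid_sub_smul_one {a b c : K} (hg : g * g = l • g + m • 1) (hh : h * h = l • h + m • 1)
    (braid : g * h * g = h * g * h) (habc : c * (a + b - l) = a * b) :
    (g - a • 1) * (h - c • 1) * (g - b • 1) = (h - b • 1) * (g - c • 1) * (h - a • 1) := by
  simp only [sub_mul, mul_sub, smul_mul_assoc, mul_smul_comm, one_mul, mul_one, hg, hh, braid]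
  linear_combination (norm := module) habc • (g - h)

end Baxterisation

section SpectralParameter

variable {K A : Type*} [Field K] [Ring A] [Algebra K A] {l m u v : K}

theorem spectral_shift_relation (l : K) (hu : u ≠ 1) (hv : v ≠ 1) (huv : u * v ≠ 1) :
    l / (1 - u * v) * (l / (1 - u) + l / (1 - v) - l) = l / (1 - u) * (l / (1 - v)) := by
  have hu' : 1 - u ≠ 0 := sub_ne_zero.2 hu.symm
  have hv' : 1 - v ≠ 0 := sub_ne_zero.2 hv.symm
  have huv' : 1 - u * v ≠ 0 := sub_ne_zero.2 huv.symm
  field_simp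
  ring

/-- The Baxterisation `g(w) = g - l / (1 - w)` of an element `g` satisfying a quadratic relation
`g² = l g + m`, with multiplicative spectral parameter `w ≠ 1`. -/
def baxterisation (l : K) (g : A) (w : K) : A :=
  g - (l / (1 - w)) • 1

theorem baxterisation_braid {g h : A} (hg : g * g = l • g + m • 1) (hh : h * h = l • h + m • 1)
    (braid : g * h * g = h * g * h) (hu : u ≠ 1) (hv : v ≠ 1) (huv : u * v ≠ 1) :
    baxterisation l g u * baxterisation l h (u * v) * baxterisation l g v =
      baxterisation l h v * baxterisation l g (u * v) * baxterisation l h u :=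
  braid_sub_smul_one hg hh braid (spectral_shift_relation l hu hv huv)

theorem map_baxterisation {B : Type*} [Ring B] [Algebra K B] (f : A →ₐ[K] B) (g : A) (w : K) :
    f (baxterisation l g w) = baxterisation l (f g) w := by
  simp only [baxterisation, map_sub, map_smul, map_one]

end SpectralParameter

section Legs

variable (K V : Type*) [CommSemiring K] [AddCommMonoid V] [Module K V]

/-- The leg notation `T₁₂ = T ⊗ id` for an operator `T` on `V ⊗ V`. -/
noncomputable def leg₁₂ : Module.End K (V ⊗[K] V) →ₐ[K] Module.End K ((V ⊗[K] V) ⊗[K] V) :=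
  Module.End.rTensorAlgHom K (V ⊗[K] V) V

/-- The leg notation `T₂₃ = id ⊗ T` for an operator `T` on `V ⊗ V`, transported along the
associator so that it acts on the same space as `T₁₂`. -/
noncomputable def leg₂₃ : Module.End K (V ⊗[K] V) →ₐ[K] Module.End K ((V ⊗[K] V) ⊗[K] V) :=
  ((TensorProduct.assoc K V V V).symm.conjAlgEquiv K).toAlgHom.comp
    (Module.End.lTensorAlgHom K (V ⊗[K] V) V)

end Legs

section HeckeAction

variable {ι K M : Type*} [LinearOrder ι] [CommRing K] [AddCommGroup M] [Module K M]

/-- `T` acts on the vectors `x i j` by the formula defining the Hecke R-matrix on the vectors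
`eᵢ ⊗ eⱼ`. Allowing an arbitrary family `x` lets the same notion describe `Ř` on `V ⊗ V` as well as
`Ř₁₂` and `Ř₂₃` on `V ⊗ V ⊗ V`. -/
def IsHeckeAction (q : Kˣ) (T : Module.End K M) (x : ι → ι → M) : Prop :=
  ∀ i j, T (x i j) =
    if i = j then (q : K) • x i j
    else if i < j then x j i + ((q : K) - ↑q⁻¹) • x i j
    else x j i

namespace IsHeckeAction

variable {q : Kˣ} {T : Module.End K M} {x : ι → ι → M} {i j : ι}

theorem apply_self (hT : IsHeckeAction q T x) (i : ι) : T (x i i) = (q : K) • x i i := by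
  simp [hT i i]

theorem apply_of_lt (hT : IsHeckeAction q T x) (hij : i < j) :
    T (x i j) = x j i + ((q : K) - ↑q⁻¹) • x i j := by
  simp [hT i j, hij, hij.ne]

theorem apply_of_gt (hT : IsHeckeAction q T x) (hij : j < i) : T (x i j) = x j i := by
  simp [hT i j, hij.ne', hij.not_gt]

theorem map (hT : IsHeckeAction q T x) {M' : Type*} [AddCommGroup M'] [Module K M']
    {T' : Module.End K M'} (f : M →ₗ[K] M') (hf : ∀ y, T' (f y) = f (T y)) :
    IsHeckeAction q T' fun i j => f (x i j) := by
  intro i j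
  simp only [hf, hT i j, apply_ite f, map_add, map_smul]

theorem apply_apply (hT : IsHeckeAction q T x) (i j : ι) :
    T (T (x i j)) = ((q : K) - ↑q⁻¹) • T (x i j) + x i j := by
  rcases lt_trichotomy i j with hij | rfl | hij
  · simp only [hT.apply_of_lt hij, hT.apply_of_gt hij, map_add, map_smul]
    abel
  · simp only [hT.apply_self, map_smul, smul_smul, sub_mul, Units.inv_mul, sub_smul, one_smul,
      sub_add_cancel]
  · simp only [hT.apply_of_gt hij, hT.apply_of_lt hij]
    abel

theorem exists_swap_eq (hT : IsHeckeAction q T x) (i j : ι) :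
    ∃ c : K, x j i = T (x i j) - c • x i j := by
  rcases lt_trichotomy i j with hij | rfl | hij
  · exact ⟨q - ↑q⁻¹, by rw [hT.apply_of_lt hij, add_sub_cancel_right]⟩
  · exact ⟨q - 1, by rw [hT.apply_self]; module⟩
  · exact ⟨0, by rw [hT.apply_of_gt hij, zero_smul, sub_zero]⟩

theorem swap_mem (hT : IsHeckeAction q T x) {p : Submodule K M} (hp : ∀ y ∈ p, T y ∈ p)
    (hij : x i j ∈ p) : x j i ∈ p := by
  obtain ⟨c, hc⟩ := hT.exists_swap_eq i j
  exact hc ▸ p.sub_mem (hp _ hij) (p.smul_mem c hij)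

end IsHeckeAction

variable {q : Kˣ} {T₁₂ T₂₃ : Module.End K M} {x : ι → ι → ι → M} {i j k : ι}

theorem braid_apply_of_sorted (h₁₂ : ∀ k, IsHeckeAction q T₁₂ fun i j => x i j k)
    (h₂₃ : ∀ i, IsHeckeAction q T₂₃ (x i)) (hij : i ≤ j) (hjk : j ≤ k) :
    T₁₂ (T₂₃ (T₁₂ (x i j k))) = T₂₃ (T₁₂ (T₂₃ (x i j k))) := by
  have self₁₂ (i k) : T₁₂ (x i i k) = _ := (h₁₂ k).apply_self i
  have lt₁₂ {i j} (k) (h : i < j) : T₁₂ (x i j k) = _ := (h₁₂ k).apply_of_lt h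
  have gt₁₂ {i j} (k) (h : j < i) : T₁₂ (x i j k) = _ := (h₁₂ k).apply_of_gt h
  have self₂₃ (i j) : T₂₃ (x i j j) = _ := (h₂₃ i).apply_self j
  have lt₂₃ (i) {j k} (h : j < k) : T₂₃ (x i j k) = _ := (h₂₃ i).apply_of_lt h
  have gt₂₃ (i) {j k} (h : k < j) : T₂₃ (x i j k) = _ := (h₂₃ i).apply_of_gt h
  have hq : (q : K) * q = (q - ↑q⁻¹) * q + 1 := by rw [sub_mul, Units.inv_mul, sub_add_cancel]
  rcases hij.eq_or_lt with rfl | hij <;> rcases hjk.eq_or_lt with rfl | hjk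
  · simp only [self₁₂, self₂₃, map_smul]
  · simp only [self₁₂, lt₁₂ _ hjk, lt₂₃ _ hjk, gt₂₃ _ hjk, self₂₃, map_add, map_smul]
    linear_combination (norm := module) (((q : K) - ↑q⁻¹) * hq) • x i i k
  · simp only [self₂₃, lt₁₂ _ hij, gt₁₂ _ hij, lt₂₃ _ hij, self₁₂, map_add, map_smul]
    linear_combination (norm := module) (-((q : K) - ↑q⁻¹) * hq) • x i j j
  · simp only [lt₁₂ _ hij, lt₁₂ _ hjk, lt₁₂ _ (hij.trans hjk), gt₁₂ _ hij, lt₂₃ _ hij,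
      lt₂₃ _ hjk, lt₂₃ _ (hij.trans hjk), gt₂₃ _ hjk, map_add, map_smul]
    module

theorem braid_apply {l m : K} (h₁₂ : ∀ k, IsHeckeAction q T₁₂ fun i j => x i j k)
    (h₂₃ : ∀ i, IsHeckeAction q T₂₃ (x i))
    (sq₁₂ : T₁₂ * T₁₂ = l • T₁₂ + m • 1)
    (sq₂₃ : T₂₃ * T₂₃ = l • T₂₃ + m • 1) (i j k : ι) :
    (T₁₂ * T₂₃ * T₁₂) (x i j k) = (T₂₃ * T₁₂ * T₂₃) (x i j k) := by
  set defect := T₁₂ * T₂₃ * T₁₂ - T₂₃ * T₁₂ * T₂₃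
  have stable₁₂ : ∀ y ∈ defect.ker, T₁₂ y ∈ defect.ker := fun _ =>
    apply_mem_ker_of_mul_eq_mul (braid_defect_mul_fst sq₁₂ sq₂₃)
  have stable₂₃ : ∀ y ∈ defect.ker, T₂₃ y ∈ defect.ker := fun _ =>
    apply_mem_ker_of_mul_eq_mul (braid_defect_mul_snd sq₁₂ sq₂₃)
  suffices x i j k ∈ defect.ker from sub_eq_zero.1 this
  refine forall_triple_of_sorted (P := fun i j k => x i j k ∈ defect.ker)
    (fun i j k hij hjk => sub_eq_zero.2 (braid_apply_of_sorted h₁₂ h₂₃ hij hjk))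
    (fun i j k => (h₁₂ k).swap_mem stable₁₂) (fun i j k => (h₂₃ i).swap_mem stable₂₃) i j k

end HeckeAction

section HeckeRMatrix

variable {ι K V : Type*} [LinearOrder ι] [CommRing K] [AddCommGroup V] [Module K V] {q : Kˣ}
  {R : Module.End K (V ⊗[K] V)}

theorem IsHeckeAction.leg₁₂ {e : ι → V} (hR : IsHeckeAction q R fun i j => e i ⊗ₜ[K] e j) (v : V) :
    IsHeckeAction q (leg₁₂ K V R) fun i j => (e i ⊗ₜ[K] e j) ⊗ₜ[K] v :=
  hR.map ((TensorProduct.mk K (V ⊗[K] V) V).flip v) fun _ => rfl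

theorem IsHeckeAction.leg₂₃ {e : ι → V} (hR : IsHeckeAction q R fun i j => e i ⊗ₜ[K] e j) (v : V) :
    IsHeckeAction q (leg₂₃ K V R) fun i j => (v ⊗ₜ[K] e i) ⊗ₜ[K] e j :=
  hR.map ((TensorProduct.assoc K V V V).symm.toLinearMap ∘ₗ TensorProduct.mk K V (V ⊗[K] V) v)
    fun y => congrArg (fun z => (TensorProduct.assoc K V V V).symm (R.lTensor V z))
      ((TensorProduct.assoc K V V V).apply_symm_apply (v ⊗ₜ[K] y))

variable (e : Module.Basis ι K V)

theorem heckeRMatrix_mul_self (hR : IsHeckeAction q R fun i j => e i ⊗ₜ[K] e j) :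
    R * R = ((q : K) - ↑q⁻¹) • R + (1 : K) • 1 := by
  refine (e.tensorProduct e).ext fun ⟨i, j⟩ => ?_
  rw [Module.Basis.tensorProduct_apply, one_smul]
  exact hR.apply_apply i j

theorem heckeRMatrix_braid (hR : IsHeckeAction q R fun i j => e i ⊗ₜ[K] e j) :
    leg₁₂ K V R * leg₂₃ K V R * leg₁₂ K V R = leg₂₃ K V R * leg₁₂ K V R * leg₂₃ K V R := by
  have sq := heckeRMatrix_mul_self e hR
  refine ((e.tensorProduct e).tensorProduct e).ext fun ⟨⟨i, j⟩, k⟩ => ?_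
  rw [Module.Basis.tensorProduct_apply, Module.Basis.tensorProduct_apply]
  exact braid_apply (x := fun i j k => (e i ⊗ₜ[K] e j) ⊗ₜ[K] e k) (fun k => hR.leg₁₂ (e k))
    (fun i => hR.leg₂₃ (e i)) (map_quadratic_relation (leg₁₂ K V) sq)
    (map_quadratic_relation (leg₂₃ K V) sq) i j k

end HeckeRMatrix

theorem baxterised_hecke_R_matrix_YBE_general {ι K V : Type*} [LinearOrder ι] [Field K]
    [AddCommGroup V] [Module K V] (e : Module.Basis ι K V) (q : Kˣ) (R : Module.End K (V ⊗[K] V))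
    (hR : IsHeckeAction q R fun i j => e i ⊗ₜ[K] e j)
    (u v : K) (hu : u ≠ 1) (hv : v ≠ 1) (huv : u * v ≠ 1) :
    let Rbax := baxterisation ((q : K) - ↑q⁻¹) R
    leg₁₂ K V (Rbax u) * leg₂₃ K V (Rbax (u * v)) * leg₁₂ K V (Rbax v) =
      leg₂₃ K V (Rbax v) * leg₁₂ K V (Rbax (u * v)) * leg₂₃ K V (Rbax u) := by
  have sq := heckeRMatrix_mul_self e hR
  intro Rbax
  simp only [Rbax, map_baxterisation (B := Module.End K ((V ⊗[K] V) ⊗[K] V))]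
  exact baxterisation_braid (map_quadratic_relation (leg₁₂ K V) sq)
    (map_quadratic_relation (leg₂₃ K V) sq) (heckeRMatrix_braid e hR) hu hv huv

/-- The Baxterised matrix solution: with `Ř` the standard Hecke R-matrix on
`ℂ^N ⊗ ℂ^N` and `Ř(u) = Ř - ((q-q⁻¹)/(1-u))·Id`, the braided Yang--Baxter equation
with multiplicative spectral parameters holds on `V⊗V⊗V`. -/
theorem baxterised_hecke_R_matrix_YBE (N : ℕ) (hN : 0 < N) (q : ℂ) (hq : q ≠ 0)
    (R : ((Fin N → ℂ) ⊗[ℂ] (Fin N → ℂ)) →ₗ[ℂ] ((Fin N → ℂ) ⊗[ℂ] (Fin N → ℂ)))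
    (hR : ∀ i j : Fin N,
      R ((Pi.single i 1 : Fin N → ℂ) ⊗ₜ[ℂ] (Pi.single j 1 : Fin N → ℂ)) =
        if i = j then
          q • ((Pi.single i 1 : Fin N → ℂ) ⊗ₜ[ℂ] (Pi.single j 1 : Fin N → ℂ))
        else if i < j then
          (Pi.single j 1 : Fin N → ℂ) ⊗ₜ[ℂ] (Pi.single i 1 : Fin N → ℂ) +
            (q - q⁻¹) • ((Pi.single i 1 : Fin N → ℂ) ⊗ₜ[ℂ] (Pi.single j 1 : Fin N → ℂ))
        else (Pi.single j 1 : Fin N → ℂ) ⊗ₜ[ℂ] (Pi.single i 1 : Fin N → ℂ))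
    (u v : ℂ) (hu : u ≠ 1) (hv : v ≠ 1) (huv : u * v ≠ 1) :
    let V := Fin N → ℂ
    let Rbax : ℂ → ((V ⊗[ℂ] V) →ₗ[ℂ] (V ⊗[ℂ] V)) :=
      fun w => R - ((q - q⁻¹) / (1 - w)) • LinearMap.id
    let α := TensorProduct.assoc ℂ V V V
    let T₁ : ℂ → (((V ⊗[ℂ] V) ⊗[ℂ] V) →ₗ[ℂ] ((V ⊗[ℂ] V) ⊗[ℂ] V)) :=
      fun w => LinearMap.rTensor V (Rbax w)
    let T₂ : ℂ → (((V ⊗[ℂ] V) ⊗[ℂ] V) →ₗ[ℂ] ((V ⊗[ℂ] V) ⊗[ℂ] V)) :=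
      fun w => α.symm.toLinearMap ∘ₗ LinearMap.lTensor V (Rbax w) ∘ₗ α.toLinearMap
    T₁ u ∘ₗ T₂ (u * v) ∘ₗ T₁ v = T₂ v ∘ₗ T₁ (u * v) ∘ₗ T₂ u := by
  exact baxterised_hecke_R_matrix_YBE_general (Pi.basisFun ℂ (Fin N)) (Units.mk0 q hq) R
    (fun i j => by
      simpa only [Pi.basisFun_apply, Units.val_mk0, Units.val_inv_eq_inv_val] using hR i j)
    u v hu hv huv
end
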